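/- arXiv:2603.03497 — 13 statements merged into one kernel-verified Lean document; each statement's English description precedes it below -/
import Mathlib

section
/- Let c ≥ 0, T > 0, and let h : ℝ → ℝ be differentiable with h(0) > 0. Suppose that for every t ∈ [0, T] with h(t) > 0 one has -h'(t)/h(t)² ≤ c·h(t) (i.e., the derivative of the reciprocal barrier B(t) = 1/h(t) satisfies B'(t) ≤ c·h(t)). Then h(t) > 0 for all t ∈ [0, T]. -/
theorem reciprocal_cbf_invariance (c T : ℝ) (hc : 0 ≤ c) (hT : 0 < T)
    (h : ℝ → ℝ) (hdiff : Differentiable ℝ h) (h0 : 0 < h 0)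
    (hineq : ∀ t ∈ Set.Icc 0 T, 0 < h t → -deriv h t / (h t) ^ 2 ≤ c * h t) :
    ∀ t ∈ Set.Icc 0 T, 0 < h t := by
  by_contra hcon
  push Not at hcon
  obtain ⟨t₀, ht₀, hle⟩ := hcon
  have hcomp : IsCompact (Set.Icc 0 T ∩ h ⁻¹' Set.Iic 0) :=
    isCompact_Icc.inter_right (isClosed_Iic.preimage hdiff.continuous)
  obtain ⟨s, ⟨hsI, hs0⟩, hsl⟩ := hcomp.exists_isLeast ⟨t₀, ht₀, hle⟩
  have hs0' : h s ≤ 0 := hs0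
  have hpos : ∀ t, 0 ≤ t → t < s → 0 < h t := by
    intro t h1 h2
    by_contra h3
    have : s ≤ t := hsl ⟨⟨h1, h2.le.trans hsI.2⟩, not_lt.mp h3⟩
    linarith
  obtain ⟨M, hM⟩ := (isCompact_Icc (a := (0:ℝ)) (b := T)).bddAbove_image
    ((hdiff.continuous.pow 2).continuousOn)
  have hM' : ∀ t ∈ Set.Icc 0 T, h t ^ 2 ≤ M := fun t ht => hM ⟨t, ht, rfl⟩
  have hder : ∀ t, HasDerivAt (fun t => h t * Real.exp (c * M * t))
      (deriv h t * Real.exp (c * M * t) + h t * (Real.exp (c * M * t) * (c * M))) t := by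
    intro t
    have h1 : HasDerivAt (fun t : ℝ => c * M * t) (c * M) t := by
      simpa using (hasDerivAt_id t).const_mul (c * M)
    exact (hdiff t).hasDerivAt.mul h1.exp
  have hmono : MonotoneOn (fun t => h t * Real.exp (c * M * t)) (Set.Icc 0 s) := by
    apply monotoneOn_of_deriv_nonneg (convex_Icc 0 s)
    · exact fun t _ => (hder t).continuousAt.continuousWithinAt
    · exact fun t _ => (hder t).differentiableAt.differentiableWithinAt
    · intro t ht
      rw [interior_Icc] at ht
      rw [(hder t).deriv]
      have htI : t ∈ Set.Icc 0 T := ⟨ht.1.le, ht.2.le.trans hsI.2⟩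
      have hp := hpos t ht.1.le ht.2
      have h1 := hineq t htI hp
      rw [div_le_iff₀ (by positivity)] at h1
      have h2 : c * h t * h t ^ 2 ≤ c * h t * M :=
        mul_le_mul_of_nonneg_left (hM' t htI) (by positivity)
      have h3 : 0 ≤ deriv h t + h t * (c * M) := by linarith
      have h4 := mul_nonneg h3 (Real.exp_pos (c * M * t)).le
      linarith
  have hfin := hmono ⟨le_rfl, hsI.1⟩ ⟨hsI.1, le_rfl⟩ hsI.1
  have h5 := mul_nonpos_of_nonpos_of_nonneg hs0' (Real.exp_pos (c * M * s)).le
  simp at hfin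
  linarith
end

section
/- Let γ₁ > 0 and γ₂ > 0, and let h : ℝ → ℝ be twice differentiable. Suppose that h''(t) + (γ₁ + γ₂)·h'(t) + γ₁·γ₂·h(t) ≥ 0 for all t ≥ 0, that h(0) ≥ 0, and that h'(0) + γ₁·h(0) ≥ 0. Then for all t ≥ 0 one has h(t) ≥ 0 and h'(t) + γ₁·h(t) ≥ 0. -/
theorem first_order_cbf (c : ℝ) (g g' : ℝ → ℝ) (hg : ∀ t, HasDerivAt g (g' t) t)
    (hi : ∀ t : ℝ, 0 ≤ t → 0 ≤ g' t + c * g t) (h0 : 0 ≤ g 0) :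
    ∀ t : ℝ, 0 ≤ t → 0 ≤ g t := by
  intro t ht
  have hd : ∀ s, HasDerivAt (fun s => Real.exp (c * s) * g s)
      (Real.exp (c * s) * (g' s + c * g s)) s := by
    intro s
    have h1 : HasDerivAt (fun s : ℝ => Real.exp (c * s)) (Real.exp (c * s) * (c * 1)) s :=
      ((hasDerivAt_id s).const_mul c).exp
    exact (h1.mul (hg s)).congr_deriv (by ring)
  have hm : MonotoneOn (fun s => Real.exp (c * s) * g s) (Set.Ici 0) := by
    apply monotoneOn_of_deriv_nonneg (convex_Ici 0)
    · exact fun s _ => (hd s).continuousAt.continuousWithinAt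
    · exact fun s _ => (hd s).differentiableAt.differentiableWithinAt
    · intro s hs
      rw [interior_Ici] at hs
      rw [(hd s).deriv]
      exact mul_nonneg (Real.exp_pos _).le (hi s (le_of_lt hs))
  have h2 := hm (Set.mem_Ici.2 le_rfl) (Set.mem_Ici.2 ht) ht
  simp only [mul_zero, Real.exp_zero, one_mul] at h2
  exact nonneg_of_mul_nonneg_right (h0.trans h2) (Real.exp_pos _)

theorem exponential_cbf_invariance (γ₁ γ₂ : ℝ) (hγ₁ : 0 < γ₁) (hγ₂ : 0 < γ₂)
    (h : ℝ → ℝ) (hdiff : Differentiable ℝ h) (hdiff2 : Differentiable ℝ (deriv h))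
    (hineq : ∀ t : ℝ, 0 ≤ t →
      deriv (deriv h) t + (γ₁ + γ₂) * deriv h t + γ₁ * γ₂ * h t ≥ 0)
    (h0 : 0 ≤ h 0) (h0' : 0 ≤ deriv h 0 + γ₁ * h 0) :
    ∀ t : ℝ, 0 ≤ t → 0 ≤ h t ∧ 0 ≤ deriv h t + γ₁ * h t := by
  have key : ∀ t : ℝ, 0 ≤ t → 0 ≤ deriv h t + γ₁ * h t :=
    first_order_cbf γ₂ (fun t => deriv h t + γ₁ * h t)
      (fun t => deriv (deriv h) t + γ₁ * deriv h t)
      (fun t => (hdiff2 t).hasDerivAt.add ((hdiff t).hasDerivAt.const_mul γ₁))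
      (fun t ht => by have := hineq t ht; linarith) h0'
  exact fun t ht => ⟨first_order_cbf γ₁ h (deriv h) (fun t => (hdiff t).hasDerivAt) key h0 t ht,
    key t ht⟩
end

section
/- Let β : ℝ → ℝ be locally Lipschitz, strictly increasing, and satisfy β(0) = 0. Let h : ℝ → ℝ be differentiable with h(t) > -1 for all t ≥ 0, and suppose h'(t) ≥ -β( h(t)/(h(t)+1) ) for all t ≥ 0. If h(0) ≥ 0, then h(t) ≥ 0 for all t ≥ 0. -/
theorem graceful_primary_safety (β : ℝ → ℝ)
    (hβlip : LocallyLipschitz β) (hβmono : StrictMono β) (hβ0 : β 0 = 0)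
    (h : ℝ → ℝ) (hdiff : Differentiable ℝ h)
    (hgt : ∀ t : ℝ, 0 ≤ t → h t > -1)
    (hineq : ∀ t : ℝ, 0 ≤ t → deriv h t ≥ -β (h t / (h t + 1)))
    (h0 : 0 ≤ h 0) :
    ∀ t : ℝ, 0 ≤ t → 0 ≤ h t := by
  intro t ht
  refine le_of_forall_pos_le_add fun ε hε => ?_
  have key := image_le_of_deriv_right_lt_deriv_boundary (f := fun x => -h x)
    (f' := fun x => -deriv h x) (a := 0) (b := t) (B := fun _ => ε) (B' := fun _ => 0)
    hdiff.continuous.neg.continuousOn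
    (fun x _ => (hdiff x).hasDerivAt.neg.hasDerivWithinAt)
    (by linarith) (fun x => hasDerivAt_const x ε)
    (by
      intro x hx hxe
      have h1 := hgt x hx.1
      have h2 := hineq x hx.1
      have h3 : h x / (h x + 1) < 0 := div_neg_of_neg_of_pos (by linarith) (by linarith)
      have h4 := hβmono h3
      linarith)
  have := key (x := t) ⟨ht, le_refl t⟩
  linarith
end

section
/- Let β : ℝ → ℝ be continuous, strictly increasing, with β(0) = 0. Let h : ℝ → ℝ be differentiable with -1 < h(0) < 0, and suppose that for every t ≥ 0 with h(t) > -1 one has h'(t) ≥ -β( h(t)/(h(t)+1) ). Then h(t) ≥ h(0) > -1 for all t ≥ 0. -/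
theorem graceful_failsafe (β : ℝ → ℝ)
    (hβcont : Continuous β) (hβmono : StrictMono β) (hβ0 : β 0 = 0)
    (h : ℝ → ℝ) (hdiff : Differentiable ℝ h)
    (h0lb : -1 < h 0) (h0ub : h 0 < 0)
    (hineq : ∀ t : ℝ, 0 ≤ t → h t > -1 → deriv h t ≥ -β (h t / (h t + 1))) :
    ∀ t : ℝ, 0 ≤ t → h t ≥ h 0 := by
  intro t ht
  have key := image_le_of_deriv_right_lt_deriv_boundary (f := fun x => -h x)
    (f' := fun x => -deriv h x) (a := 0) (b := t) (B := fun _ => -h 0) (B' := fun _ => 0)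
    (hdiff.continuous.neg.continuousOn)
    (fun x _ => ((hdiff x).hasDerivAt.neg).hasDerivWithinAt) le_rfl
    (fun x => hasDerivAt_const x _)
    (by
      intro x hx hxe
      have he : h x = h 0 := by
        have : -h x = -h 0 := hxe
        linarith
      have h1 := hineq x hx.1 (by rw [he]; exact h0lb)
      rw [he] at h1
      have h2 : h 0 / (h 0 + 1) < 0 := div_neg_of_neg_of_pos h0ub (by linarith)
      have h3 := hβmono h2
      rw [hβ0] at h3
      change -deriv h x < 0
      linarith)
  have h4 : -h t ≤ -h 0 := key ⟨ht, le_rfl⟩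
  linarith
end

section
/- Let β : ℝ → ℝ be continuous, strictly increasing, with β(0) = 0. Let h : ℝ → ℝ be differentiable with -1 < h(0) < 0, and suppose that for every t ≥ 0 with h(t) > -1 one has h'(t) ≥ -β( h(t)/(h(t)+1) ). Then for every ε with 0 < ε < 1 there exists T ≥ 0 such that h(t) > -ε for all t ≥ T. -/
theorem graceful_convergence (β : ℝ → ℝ)
    (hβcont : Continuous β) (hβmono : StrictMono β) (hβ0 : β 0 = 0)
    (h : ℝ → ℝ) (hdiff : Differentiable ℝ h)
    (h0lb : -1 < h 0) (h0ub : h 0 < 0)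
    (hineq : ∀ t : ℝ, 0 ≤ t → h t > -1 → deriv h t ≥ -β (h t / (h t + 1))) :
    ∀ ε : ℝ, 0 < ε → ε < 1 → ∃ T : ℝ, 0 ≤ T ∧ ∀ t : ℝ, T ≤ t → h t > -ε := by
  have hneg : ∀ c : ℝ, -1 < c → c < 0 → 0 < -β (c / (c + 1)) := by
    intro c h1 h2
    have h3 : c / (c + 1) < 0 := div_neg_of_neg_of_pos h2 (by linarith)
    have := hβmono h3
    linarith
  have inv : ∀ c : ℝ, -1 < c → c < 0 → ∀ a : ℝ, 0 ≤ a → c ≤ h a → ∀ t, a ≤ t → c ≤ h t := by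
    intro c h1 h2 a ha hca t hat
    have key := image_le_of_deriv_right_lt_deriv_boundary (f := fun x => - h x)
      (f' := fun x => - deriv h x) (a := a) (b := t) (B := fun _ => -c) (B' := fun _ => 0)
      (hdiff.continuous.neg.continuousOn)
      (fun x _ => (hdiff x).hasDerivAt.neg.hasDerivWithinAt)
      (by simpa using hca) (fun x => hasDerivAt_const x _)
      (by
        intro x hx hxc
        have hxc' : h x = c := by simpa using hxc
        have := hineq x (ha.trans hx.1) (by linarith)
        rw [hxc'] at this
        have := hneg c h1 h2
        linarith)
    have := key (Set.right_mem_Icc.2 hat)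
    simpa using this
  intro ε h1 h2
  have reach : ∃ T : ℝ, 0 ≤ T ∧ -(ε/2) ≤ h T := by
    by_contra! hcon
    set c := -(ε/2) with hc
    have hm := hneg c (by linarith) (by linarith)
    set m := -β (c / (c + 1)) with hmdef
    have hT : 0 ≤ -h 0 / m := div_nonneg (by linarith) hm.le
    have key := (convex_Ici (0:ℝ)).mul_sub_le_image_sub_of_le_deriv (f := h) (C := m)
      hdiff.continuous.continuousOn hdiff.differentiableOn
      (by
        intro x hx
        have hx0 : 0 ≤ x := interior_subset hx
        have hl := inv (h 0) h0lb h0ub 0 le_rfl le_rfl x hx0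
        have hu := hcon x hx0
        have hd := hineq x hx0 (by linarith)
        have : h x / (h x + 1) ≤ c / (c + 1) := by
          rw [div_le_div_iff₀ (by linarith) (by linarith)]
          nlinarith
        have := hβmono.monotone this
        linarith)
      0 (Set.mem_Ici.2 le_rfl) (-h 0 / m) (Set.mem_Ici.2 hT) hT
    have e : m * (-h 0 / m - 0) = -h 0 := by field_simp; ring
    have := hcon _ hT
    linarith
  obtain ⟨T, hT, hTc⟩ := reach
  refine ⟨T, hT, fun t ht => ?_⟩
  have := inv (-(ε/2)) (by linarith) (by linarith) T hT hTc t ht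
  linarith
end

section
/- Let γ > 0 and let h : ℝ → ℝ be differentiable at a point t with -1 < h(t) < 0 and h'(t) ≥ -γ·h(t)/(h(t)+1). Then the function t ↦ h(t) - ln(h(t) + 1) is differentiable at t and its derivative at t is at most -γ·( h(t)/(h(t)+1) )². -/
theorem lyapunov_decrease_first_order (γ : ℝ) (hγ : 0 < γ)
    (h : ℝ → ℝ) (t : ℝ) (hdiff : DifferentiableAt ℝ h t)
    (hlb : -1 < h t) (hub : h t < 0)
    (hineq : deriv h t ≥ -γ * h t / (h t + 1)) :
    DifferentiableAt ℝ (fun s => h s - Real.log (h s + 1)) t ∧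
      deriv (fun s => h s - Real.log (h s + 1)) t ≤ -γ * (h t / (h t + 1)) ^ 2 := by
  have hpos : 0 < h t + 1 := by linarith
  have hd := hdiff.hasDerivAt.sub ((hdiff.hasDerivAt.add_const 1).log hpos.ne')
  have hd' : HasDerivAt (fun s => h s - Real.log (h s + 1))
      (deriv h t - deriv h t / (h t + 1)) t := hd
  refine ⟨hd'.differentiableAt, ?_⟩
  rw [hd'.deriv]
  have e1 : deriv h t - deriv h t / (h t + 1) = deriv h t * (h t / (h t + 1)) := by
    field_simp
    ring
  have e2 : -γ * (h t / (h t + 1)) ^ 2 = (-γ * h t / (h t + 1)) * (h t / (h t + 1)) := by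
    ring
  rw [e1, e2]
  exact mul_le_mul_of_nonpos_right hineq (div_neg_of_neg_of_pos hub hpos).le
end

section
/- Let γ > 0 and let h : ℝ → ℝ be differentiable with h'(t) = -γ·h(t)/(h(t)+1) for all t ≥ 0 and -1 < h(0) < 0. Then for all t > 0 one has -1 < h(0) < h(t) < 0, the restriction of h to [0, ∞) is strictly increasing, and h(t) → 0 as t → ∞. -/
open Filter Topology in
theorem graceful_ode_monotone_convergence (γ : ℝ) (hγ : 0 < γ)
    (h : ℝ → ℝ) (hdiff : Differentiable ℝ h)
    (hode : ∀ t : ℝ, 0 ≤ t → deriv h t = -γ * h t / (h t + 1))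
    (h0lb : -1 < h 0) (h0ub : h 0 < 0) :
    (∀ t : ℝ, 0 < t → h 0 < h t ∧ h t < 0) ∧
    StrictMonoOn h (Set.Ici 0) ∧
    Tendsto h atTop (𝓝 0) := by
  have hlow : ∀ t : ℝ, 0 ≤ t → h 0 ≤ h t := by
    intro t ht
    have key := image_le_of_deriv_right_lt_deriv_boundary (f := fun x => - h x)
      (f' := fun x => - deriv h x) (a := 0) (b := t)
      (B := fun _ => - h 0) (B' := fun _ => 0)
      (hdiff.continuous.neg.continuousOn)
      (fun x _ => (hdiff x).hasDerivAt.neg.hasDerivWithinAt)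
      le_rfl (fun x => hasDerivAt_const x _)
      (by
        intro x hx hxe
        have e : h x = h 0 := by simpa using hxe
        have : 0 < -γ * h 0 / (h 0 + 1) := div_pos (by nlinarith) (by linarith)
        show - deriv h x < 0
        rw [hode x hx.1, e]
        linarith)
    have := key (x := t) ⟨ht, le_rfl⟩
    simpa using this
  have hconst : ∀ t : ℝ, 0 ≤ t → h t * Real.exp (h t + γ * t) = h 0 * Real.exp (h 0) := by
    intro t ht
    have hd : ∀ x : ℝ, HasDerivAt (fun x => h x * Real.exp (h x + γ * x))
        (deriv h x * Real.exp (h x + γ * x)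
          + h x * (Real.exp (h x + γ * x) * (deriv h x + γ * 1))) x := fun x =>
      (hdiff x).hasDerivAt.mul
        (((hdiff x).hasDerivAt.add ((hasDerivAt_id x).const_mul γ)).exp)
    have key := constant_of_has_deriv_right_zero
      (f := fun x => h x * Real.exp (h x + γ * x)) (a := 0) (b := t)
      (fun x _ => (hd x).continuousAt.continuousWithinAt)
      (by
        intro x hx
        have h1 : h x + 1 ≠ 0 := by have := hlow x hx.1; linarith
        convert (hd x).hasDerivWithinAt using 1
        rw [hode x hx.1]
        field_simp
        ring)
    have := key t ⟨ht, le_rfl⟩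
    simpa using this
  have hneg : ∀ t : ℝ, 0 ≤ t → h t < 0 := by
    intro t ht
    have h1 := hconst t ht
    by_contra hc
    push Not at hc
    have h2 := mul_nonneg hc (Real.exp_pos (h t + γ * t)).le
    have h3 := mul_neg_of_neg_of_pos h0ub (Real.exp_pos (h 0))
    linarith
  have hmono : StrictMonoOn h (Set.Ici 0) := by
    apply strictMonoOn_of_deriv_pos (convex_Ici 0) hdiff.continuous.continuousOn
    intro x hx
    rw [interior_Ici] at hx
    have hx' : 0 ≤ x := le_of_lt hx
    rw [hode x hx']
    have := hneg x hx'
    have := hlow x hx'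
    exact div_pos (by nlinarith) (by linarith)
  refine ⟨fun t ht => ⟨hmono Set.self_mem_Ici ht.le ht, hneg t ht.le⟩, hmono, ?_⟩
  have hlim : Tendsto (fun t : ℝ => h 0 * Real.exp (-(γ * t))) atTop (𝓝 0) := by
    have := (Real.tendsto_exp_neg_atTop_nhds_zero.comp
      (tendsto_id.const_mul_atTop hγ)).const_mul (h 0)
    simpa [Function.comp_def] using this
  refine tendsto_of_tendsto_of_tendsto_of_le_of_le' hlim tendsto_const_nhds ?_ ?_
  · filter_upwards [eventually_ge_atTop 0] with t ht
    have e : h t = h 0 * Real.exp (h 0 - h t - γ * t) := by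
      have h1 := hconst t ht
      have : Real.exp (h 0 - h t - γ * t) = Real.exp (h 0) / Real.exp (h t + γ * t) := by
        rw [← Real.exp_sub]; ring_nf
      rw [this, ← mul_div_assoc, ← h1, mul_div_assoc, div_self (Real.exp_pos _).ne', mul_one]
    rw [e]
    apply mul_le_mul_of_nonpos_left _ h0ub.le
    apply Real.exp_le_exp.2
    have := hlow t ht
    linarith
  · filter_upwards [eventually_ge_atTop 0] with t ht using (hneg t ht).le
end

section
/- Let γ > 0 and let h : ℝ → ℝ be differentiable with h'(t) = -γ·h(t)/(h(t)+1) for all t ≥ 0, and suppose -1 < h(t) < 0 for all t ≥ 0. Then for every τ ≥ 0 one has τ = -(1/γ)·( h(τ) + ln(-h(τ)) - h(0) - ln(-h(0)) ). -/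
theorem graceful_ode_implicit_solution (γ : ℝ) (hγ : 0 < γ)
    (h : ℝ → ℝ) (hdiff : Differentiable ℝ h)
    (hode : ∀ t : ℝ, 0 ≤ t → deriv h t = -γ * h t / (h t + 1))
    (hrange : ∀ t : ℝ, 0 ≤ t → -1 < h t ∧ h t < 0) :
    ∀ τ : ℝ, 0 ≤ τ →
      τ = -(1 / γ) * (h τ + Real.log (-h τ) - h 0 - Real.log (-h 0)) := by
  intro τ hτ
  have key : ∀ t : ℝ, 0 ≤ t →
      HasDerivAt (fun s => h s + Real.log (-h s) + γ * s) 0 t := by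
    intro t ht
    obtain ⟨h1, h2⟩ := hrange t ht
    have hd : HasDerivAt h (-γ * h t / (h t + 1)) t := by
      rw [← hode t ht]
      exact (hdiff t).hasDerivAt
    have hne : -h t ≠ 0 := by linarith
    have hne0 : h t ≠ 0 := h2.ne
    have hne1 : h t + 1 ≠ 0 := by linarith
    have hl := (hd.add (hd.fun_neg.log hne)).add ((hasDerivAt_id t).const_mul γ)
    refine hl.congr_deriv ?_
    field_simp
    ring
  have hc := constant_of_has_deriv_right_zero (a := 0) (b := τ)
    (fun t ht => (key t ht.1).continuousAt.continuousWithinAt)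
    (fun t ht => (key t ht.1).hasDerivWithinAt) τ ⟨hτ, le_rfl⟩
  simp only [mul_zero, add_zero] at hc
  have : h τ + Real.log (-h τ) - h 0 - Real.log (-h 0) = -(γ * τ) := by linarith
  rw [this]
  field_simp
end

section
/- Let γ > 0. Let y : ℝ → ℝ be differentiable with y'(t) = -γ·y(t)/(y(t)+1) and -1 < y(t) < 0 for all t ≥ 0. Let h : ℝ → ℝ be differentiable with h(0) = y(0), such that for every t ≥ 0 with h(t) > -1 one has h'(t) ≥ -γ·h(t)/(h(t)+1). Then h(t) ≥ y(t) for all t ≥ 0. -/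
theorem graceful_comparison_lemma (γ : ℝ) (hγ : 0 < γ)
    (y : ℝ → ℝ) (hydiff : Differentiable ℝ y)
    (hyode : ∀ t : ℝ, 0 ≤ t → deriv y t = -γ * y t / (y t + 1))
    (hyrange : ∀ t : ℝ, 0 ≤ t → -1 < y t ∧ y t < 0)
    (h : ℝ → ℝ) (hdiff : Differentiable ℝ h) (hinit : h 0 = y 0)
    (hineq : ∀ t : ℝ, 0 ≤ t → h t > -1 → deriv h t ≥ -γ * h t / (h t + 1)) :
    ∀ t : ℝ, 0 ≤ t → h t ≥ y t := by
  have hmono : MonotoneOn y (Set.Ici 0) := by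
    apply monotoneOn_of_deriv_nonneg (convex_Ici 0) hydiff.continuous.continuousOn
      hydiff.differentiableOn
    intro x hx
    rw [interior_Ici] at hx
    have hx0 : (0:ℝ) ≤ x := le_of_lt hx
    obtain ⟨h1, h2⟩ := hyrange x hx0
    rw [hyode x hx0]
    apply div_nonneg
    · nlinarith
    · linarith
  intro T hT
  have key : ∀ ε : ℝ, 0 < ε → ε * T < y 0 + 1 → y T - ε * T ≤ h T := by
    intro ε hε hεT
    refine image_le_of_deriv_right_lt_deriv_boundary (f := fun x => y x - ε * x)
      (f' := fun x => deriv y x - ε * 1) (B := h) (B' := deriv h) (a := 0) (b := T)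
      ?_ ?_ ?_ ?_ ?_ (Set.right_mem_Icc.2 hT)
    · exact (hydiff.continuous.sub (continuous_const.mul continuous_id)).continuousOn
    · intro x _
      exact ((hydiff x).hasDerivAt.sub ((hasDerivAt_id x).const_mul ε)).hasDerivWithinAt
    · simp [hinit]
    · intro x
      exact (hdiff x).hasDerivAt
    · intro x hx hxe
      have hx0 : 0 ≤ x := hx.1
      have hy0 : y 0 ≤ y x := hmono (Set.mem_Ici.2 le_rfl) (Set.mem_Ici.2 hx0) hx0
      have hle : ε * x ≤ ε * T := mul_le_mul_of_nonneg_left hx.2.le hε.le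
      have hnn : 0 ≤ ε * x := mul_nonneg hε.le hx0
      have hxe' : y x - ε * x = h x := hxe
      have hh : h x > -1 := by linarith
      have h1 := hineq x hx0 hh
      have h2 : -γ * y x / (y x + 1) ≤ -γ * h x / (h x + 1) := by
        rw [div_le_div_iff₀ (by linarith) (by linarith)]
        have : 0 ≤ γ * (y x - h x) := mul_nonneg hγ.le (by linarith)
        nlinarith
      have h3 := hyode x hx0
      change deriv y x - ε * 1 < deriv h x
      linarith
  by_contra hc
  have hd : 0 < y T - h T := by linarith [not_le.1 hc]
  have hy : 0 < y 0 + 1 := by linarith [(hyrange 0 le_rfl).1]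
  have hm : 0 < min (y T - h T) (y 0 + 1) := lt_min hd hy
  have hT1 : 0 < T + 1 := by linarith
  have hlt : min (y T - h T) (y 0 + 1) / (T + 1) * T < min (y T - h T) (y 0 + 1) := by
    rw [div_mul_eq_mul_div, div_lt_iff₀ hT1]
    nlinarith
  have := key _ (div_pos hm hT1) (hlt.trans_le (min_le_right _ _))
  linarith [min_le_left (y T - h T) (y 0 + 1)]
end

section
/- Let ζ > 0 and ω > 0, and let h : ℝ → ℝ be twice differentiable with -1 < h(0) < 0. Suppose that for every t ≥ 0 with h(t) > -1 one has h''(t) + 2·ζ·ω·h'(t) + ω²·h(t)/(h(t)+1) ≥ 0. Then h(t) > -1 for all t ≥ 0. -/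
open Filter Topology in
theorem second_order_graceful_failsafe (ζ ω : ℝ) (hζ : 0 < ζ) (hω : 0 < ω)
    (h : ℝ → ℝ) (hdiff : Differentiable ℝ h) (hdiff2 : Differentiable ℝ (deriv h))
    (h0lb : -1 < h 0) (h0ub : h 0 < 0)
    (hineq : ∀ t : ℝ, 0 ≤ t → h t > -1 →
      deriv (deriv h) t + 2 * ζ * ω * deriv h t + ω ^ 2 * (h t / (h t + 1)) ≥ 0) :
    ∀ t : ℝ, 0 ≤ t → h t > -1 := by
  by_contra hcon
  push Not at hcon
  obtain ⟨t₁, ht₁, hht₁⟩ := hcon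
  have hc : Continuous h := hdiff.continuous
  let S : Set ℝ := {t | 0 ≤ t ∧ h t ≤ -1}
  have hSc : IsClosed S :=
    (isClosed_le continuous_const continuous_id).inter (isClosed_le hc continuous_const)
  have hSb : BddBelow S := ⟨0, fun t ht => ht.1⟩
  have hT : sInf S ∈ S := hSc.csInf_mem ⟨t₁, ht₁, hht₁⟩ hSb
  have hmin : ∀ t, 0 ≤ t → t < sInf S → -1 < h t := by
    intro t ht htT
    by_contra hn
    exact absurd (csInf_le hSb (show t ∈ S from ⟨ht, not_lt.mp hn⟩)) (not_le.mpr htT)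
  generalize sInf S = T at hT hmin
  obtain ⟨hT0, hTle⟩ := hT
  have hTpos : 0 < T := by
    rcases hT0.eq_or_lt with h' | h'
    · subst h'; linarith
    · exact h'
  have hev : ∀ᶠ t in 𝓝[<] T, 0 < t :=
    nhdsWithin_le_nhds (lt_mem_nhds hTpos)
  have hTeq : h T = -1 := by
    refine le_antisymm hTle ?_
    refine ge_of_tendsto (hc.continuousAt.tendsto.mono_left (nhdsWithin_le_nhds (s := Set.Iio T))) ?_
    filter_upwards [hev, self_mem_nhdsWithin] with t ht htT
    exact (hmin t ht.le htT).le
  let g : ℝ → ℝ := fun t => deriv h t + 2 * ζ * ω * h t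
  have hg : ∀ t, HasDerivAt g (deriv (deriv h) t + 2 * ζ * ω * deriv h t) t := fun t =>
    (hdiff2 t).hasDerivAt.add ((hdiff t).hasDerivAt.const_mul _)
  obtain ⟨D, hD⟩ : ∃ D, HasDerivAt g D T := ⟨_, hg T⟩
  have hslope : ∀ᶠ t in 𝓝[<] T, slope g T t < D + 1 := by
    have := hD.tendsto_slope.eventually_lt_const (lt_add_one D)
    exact this.filter_mono (nhdsWithin_mono _ fun x hx => ne_of_lt hx)
  have hsmall : ∀ᶠ t in 𝓝 T, (D + 1) * (h t + 1) + ω ^ 2 * h t < 0 := by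
    have hcc : Continuous fun t => (D + 1) * (h t + 1) + ω ^ 2 * h t := by fun_prop
    refine hcc.continuousAt.eventually_lt_const ?_
    beta_reduce
    rw [hTeq]
    have : 0 < ω ^ 2 := by positivity
    linarith
  obtain ⟨ε, hε, hball⟩ := Metric.eventually_nhds_iff.mp hsmall
  have hnear : ∀ᶠ t in 𝓝[<] T, T - ε < t :=
    nhdsWithin_le_nhds (lt_mem_nhds (by linarith))
  obtain ⟨t, ⟨⟨ht0, hts⟩, htε⟩, htT⟩ :=
    (((hev.and hslope).and hnear).and (self_mem_nhdsWithin : Set.Iio T ∈ 𝓝[<] T)).exists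
  have htT : t < T := htT
  obtain ⟨c, ⟨hc1, hc2⟩, hceq⟩ := exists_hasDerivAt_eq_slope g _ htT
    (fun x _ => (hg x).continuousAt.continuousWithinAt) (fun x _ => hg x)
  rw [slope_comm, slope_def_field, ← hceq] at hts
  have hcm := hmin c (by linarith) hc2
  have h1 := hineq c (by linarith) hcm
  have h2 := hball (y := c) (by rw [Real.dist_eq, abs_lt]; constructor <;> linarith)
  have hp : 0 < h c + 1 := by linarith
  have h3 : ω ^ 2 * (h c / (h c + 1)) < -(D + 1) := by
    rw [← mul_div_assoc, div_lt_iff₀ hp]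
    linarith
  linarith
end

section
/- Let ζ > 0 and ω > 0, and let h : ℝ → ℝ be twice differentiable at a point t with h(t) > -1, h'(t) < 0, and h''(t) + 2·ζ·ω·h'(t) + ω²·h(t)/(h(t)+1) ≥ 0. Then the function V(t) = ½·(min(h'(t), 0))² + ω²·( h(t) - ln(h(t)+1) ) is differentiable at t with derivative at most -2·ζ·ω·(h'(t))² < 0. -/
open Filter Topology in
theorem second_order_lyapunov_decrease_neg_rate (ζ ω : ℝ) (hζ : 0 < ζ) (hω : 0 < ω)
    (h : ℝ → ℝ) (t : ℝ)
    (hdiff : ∀ᶠ s in 𝓝 t, DifferentiableAt ℝ h s)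
    (hdiff2 : DifferentiableAt ℝ (deriv h) t)
    (hlb : -1 < h t) (hneg : deriv h t < 0)
    (hineq : deriv (deriv h) t + 2 * ζ * ω * deriv h t + ω ^ 2 * (h t / (h t + 1)) ≥ 0) :
    DifferentiableAt ℝ
      (fun s => (1 / 2) * (min (deriv h s) 0) ^ 2 + ω ^ 2 * (h s - Real.log (h s + 1))) t ∧
    deriv (fun s => (1 / 2) * (min (deriv h s) 0) ^ 2 + ω ^ 2 * (h s - Real.log (h s + 1))) t
      ≤ -2 * ζ * ω * (deriv h t) ^ 2 ∧
    -2 * ζ * ω * (deriv h t) ^ 2 < 0 := by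
  have h1 : h t + 1 ≠ 0 := by linarith
  have hd : HasDerivAt h (deriv h t) t := hdiff.self_of_nhds.hasDerivAt
  have hd2 : HasDerivAt (deriv h) (deriv (deriv h) t) t := hdiff2.hasDerivAt
  have hm : HasDerivAt (fun s => min (deriv h s) 0) (deriv (deriv h) t) t := by
    refine hd2.congr_of_eventuallyEq ?_
    filter_upwards [hd2.continuousAt.eventually (gt_mem_nhds hneg)] with s hs
    exact min_eq_left hs.le
  have hV := ((hm.pow 2).const_mul (1 / 2)).add
    ((hd.sub ((hd.add_const 1).log h1)).const_mul (ω ^ 2))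
  have hV' : HasDerivAt
      (fun s => (1 / 2) * (min (deriv h s) 0) ^ 2 + ω ^ 2 * (h s - Real.log (h s + 1)))
      ((deriv (deriv h) t + ω ^ 2 * (h t / (h t + 1))) * deriv h t) t := by
    refine hV.congr_deriv ?_
    simp only [min_eq_left hneg.le]
    field_simp
    ring
  refine ⟨hV'.differentiableAt, ?_, ?_⟩
  · rw [hV'.deriv]
    nlinarith [mul_nonneg hineq (neg_pos.mpr hneg).le]
  · have h2 : 0 < ζ * ω * (deriv h t) ^ 2 :=
      mul_pos (mul_pos hζ hω) (sq_pos_of_neg hneg)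
    linarith
end

section
/- Let ζ > 0 and ω > 0, and let h : ℝ → ℝ be twice differentiable at a point t with -1 < h(t) < 0 and h'(t) > 0. Then the function V(t) = ½·(min(h'(t), 0))² + ω²·( h(t) - ln(h(t)+1) ) is differentiable at t with derivative equal to ω²·( h(t)/(h(t)+1) )·h'(t), which is negative. -/
open Filter Topology in
theorem second_order_lyapunov_decrease_pos_rate (ζ ω : ℝ) (hζ : 0 < ζ) (hω : 0 < ω)
    (h : ℝ → ℝ) (t : ℝ)
    (hdiff : ∀ᶠ s in 𝓝 t, DifferentiableAt ℝ h s)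
    (hdiff2 : DifferentiableAt ℝ (deriv h) t)
    (hlb : -1 < h t) (hub : h t < 0) (hpos : 0 < deriv h t) :
    DifferentiableAt ℝ
      (fun s => (1 / 2) * (min (deriv h s) 0) ^ 2 + ω ^ 2 * (h s - Real.log (h s + 1))) t ∧
    deriv (fun s => (1 / 2) * (min (deriv h s) 0) ^ 2 + ω ^ 2 * (h s - Real.log (h s + 1))) t
      = ω ^ 2 * (h t / (h t + 1)) * deriv h t ∧
    ω ^ 2 * (h t / (h t + 1)) * deriv h t < 0 := by
  have h1 : 0 < h t + 1 := by linarith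
  have hd : HasDerivAt h (deriv h t) t := hdiff.self_of_nhds.hasDerivAt
  have key : HasDerivAt (fun s => ω ^ 2 * (h s - Real.log (h s + 1)))
      (ω ^ 2 * (h t / (h t + 1)) * deriv h t) t := by
    have := (hd.sub ((hd.add_const 1).log h1.ne')).const_mul (ω ^ 2)
    refine this.congr_deriv ?_
    field_simp
    ring
  have hV : HasDerivAt
      (fun s => (1 / 2) * (min (deriv h s) 0) ^ 2 + ω ^ 2 * (h s - Real.log (h s + 1)))
      (ω ^ 2 * (h t / (h t + 1)) * deriv h t) t := by
    refine key.congr_of_eventuallyEq ?_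
    filter_upwards [hdiff2.continuousAt.eventually (lt_mem_nhds hpos)] with s hs
    rw [min_eq_right (le_of_lt hs)]
    ring
  refine ⟨hV.differentiableAt, hV.deriv, ?_⟩
  exact mul_neg_of_neg_of_pos
    (mul_neg_of_pos_of_neg (by positivity) (div_neg_of_neg_of_pos hub h1)) hpos
end

section
/- Let γ₁ > 0 and γ₂ > 0, and let h : ℝ → ℝ be twice differentiable with h(t) > -1 for all t ≥ 0. Suppose that h''(t) + (γ₁ + γ₂)·h'(t) + γ₁·γ₂·h(t)/(h(t)+1) ≥ 0 for all t ≥ 0, that h(0) ≥ 0, and that h'(0) + γ₁·h(0) ≥ 0. Then for all t ≥ 0 one has h(t) ≥ 0 and h'(t) + γ₁·h(t) ≥ 0. -/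
theorem aux_first_order (c : ℝ) (f : ℝ → ℝ) (hf : Differentiable ℝ f)
    (hi : ∀ t : ℝ, 0 ≤ t → 0 ≤ deriv f t + c * f t) (h0 : 0 ≤ f 0) :
    ∀ t : ℝ, 0 ≤ t → 0 ≤ f t := by
  intro t ht
  have hd : ∀ x, HasDerivAt (fun s => Real.exp (c * s) * f s)
      (Real.exp (c * x) * (deriv f x + c * f x)) x := by
    intro x
    have h1 : HasDerivAt (fun s : ℝ => c * s) c x := by
      simpa using (hasDerivAt_id x).const_mul c
    have h2 := h1.exp.mul (hf x).hasDerivAt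
    refine h2.congr_deriv ?_
    ring
  have hm : MonotoneOn (fun s => Real.exp (c * s) * f s) (Set.Ici 0) := by
    apply monotoneOn_of_deriv_nonneg (convex_Ici 0)
    · exact fun x _ => (hd x).continuousAt.continuousWithinAt
    · exact fun x _ => (hd x).differentiableAt.differentiableWithinAt
    · intro x hx
      rw [(hd x).deriv]
      exact mul_nonneg (Real.exp_pos _).le (hi x (interior_subset hx))
  have h3 := hm (Set.mem_Ici.2 le_rfl) (Set.mem_Ici.2 ht) ht
  simp only [mul_zero, Real.exp_zero, one_mul] at h3
  exact nonneg_of_mul_nonneg_right (h0.trans h3) (Real.exp_pos _)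

theorem second_order_graceful_primary_safety (γ₁ γ₂ : ℝ) (hγ₁ : 0 < γ₁) (hγ₂ : 0 < γ₂)
    (h : ℝ → ℝ) (hdiff : Differentiable ℝ h) (hdiff2 : Differentiable ℝ (deriv h))
    (hgt : ∀ t : ℝ, 0 ≤ t → h t > -1)
    (hineq : ∀ t : ℝ, 0 ≤ t →
      deriv (deriv h) t + (γ₁ + γ₂) * deriv h t + γ₁ * γ₂ * (h t / (h t + 1)) ≥ 0)
    (h0 : 0 ≤ h 0) (h0' : 0 ≤ deriv h 0 + γ₁ * h 0) :
    ∀ t : ℝ, 0 ≤ t → 0 ≤ h t ∧ 0 ≤ deriv h t + γ₁ * h t := by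
  have hv : ∀ t : ℝ, 0 ≤ t → 0 ≤ deriv h t + γ₁ * h t := by
    apply aux_first_order γ₂ (fun t => deriv h t + γ₁ * h t) (hdiff2.add (hdiff.const_mul γ₁)) _ h0'
    intro t ht
    have hd : HasDerivAt (fun t => deriv h t + γ₁ * h t)
        (deriv (deriv h) t + γ₁ * deriv h t) t :=
      (hdiff2 t).hasDerivAt.add ((hdiff t).hasDerivAt.const_mul γ₁)
    rw [hd.deriv]
    have hp : 0 < h t + 1 := by linarith [hgt t ht]
    have hle : h t / (h t + 1) ≤ h t := by
      rw [div_le_iff₀ hp]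
      nlinarith [sq_nonneg (h t)]
    have h5 := mul_le_mul_of_nonneg_left hle (mul_pos hγ₁ hγ₂).le
    have h6 := hineq t ht
    linarith
  intro t ht
  exact ⟨aux_first_order γ₁ h hdiff hv h0 t ht, hv t ht⟩
end
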